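/- Let ψ be a regular N-function such that both ψ and its conjugate ψ* satisfy the Δ₂-condition. Then for every ε > 0 there exists a constant c_ε > 0, depending only on ε, Δ₂(ψ) and Δ₂(ψ*), such that t·ψ'(s) + ψ'(t)·s ≤ ε·ψ(t) + c_ε·ψ(s) for all s, t ≥ 0. -/

import Mathlib

open Real Filter Set Topology

noncomputable section

/-- An N-function: convex on `[0,∞)`, vanishing at `0`, positive on `(0,∞)`,
with `ψ t / t → 0` as `t → 0⁺` and `ψ t / t → ∞` as `t → ∞`. -/
def IsNFunction (ψ : ℝ → ℝ) : Prop :=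
  ConvexOn ℝ (Set.Ici 0) ψ ∧ ψ 0 = 0 ∧ (∀ t > 0, 0 < ψ t) ∧
    Filter.Tendsto (fun t => ψ t / t) (nhdsWithin 0 (Set.Ioi 0)) (nhds 0) ∧
    Filter.Tendsto (fun t => ψ t / t) Filter.atTop Filter.atTop

/-- A regular N-function: an N-function which is `C¹` on `[0,∞)`, `C²` on `(0,∞)`,
with `ψ'' t > 0` for all `t > 0`. -/
def IsRegularNFunction (ψ : ℝ → ℝ) : Prop :=
  IsNFunction ψ ∧ ContDiffOn ℝ 1 ψ (Set.Ici 0) ∧ ContDiffOn ℝ 2 ψ (Set.Ioi 0) ∧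
    ∀ t > 0, 0 < deriv (deriv ψ) t

/-- A balanced N-function with characteristics `(γ₁, γ₂)`. -/
def IsBalancedNFunction (ψ : ℝ → ℝ) (γ₁ γ₂ : ℝ) : Prop :=
  IsRegularNFunction ψ ∧ 0 < γ₁ ∧ γ₁ ≤ 1 ∧ 1 ≤ γ₂ ∧
    ∀ t > 0, γ₁ * deriv ψ t ≤ t * deriv (deriv ψ) t ∧
      t * deriv (deriv ψ) t ≤ γ₂ * deriv ψ t

/-- The conjugate N-function `ψ*(t) = sup_{s ≥ 0} (s·t − ψ(s))`. -/
def conjNF (ψ : ℝ → ℝ) (t : ℝ) : ℝ :=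
  ⨆ s : Set.Ici (0:ℝ), ((s : ℝ) * t - ψ s)

/-- `ψ` satisfies the Δ₂-condition with constant `K`. -/
def SatisfiesDelta2 (ψ : ℝ → ℝ) (K : ℝ) : Prop :=
  2 < K ∧ ∀ t ≥ (0:ℝ), ψ (2 * t) ≤ K * ψ t

/-- The derivative `ψ'_a(t) = ψ'(a+t)·t/(a+t)` of the shifted N-function. -/
def shiftDF (ψ : ℝ → ℝ) (a t : ℝ) : ℝ := deriv ψ (a + t) * t / (a + t)

/-- The shifted N-function `ψ_a(t) = ∫₀ᵗ ψ'(a+s)·s/(a+s) ds`. -/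
def shiftNF (ψ : ℝ → ℝ) (a t : ℝ) : ℝ := ∫ s in (0:ℝ)..t, shiftDF ψ a s

/-- Frobenius norm of a `d×n` real matrix. -/
def frobNorm {d n : ℕ} (P : Fin d → Fin n → ℝ) : ℝ :=
  Real.sqrt (∑ i : Fin d, ∑ j : Fin n, (P i j) ^ 2)

/-- Frobenius inner product `P : Q` of two `d×n` real matrices. -/
def frobInner {d n : ℕ} (P Q : Fin d → Fin n → ℝ) : ℝ :=
  ∑ i : Fin d, ∑ j : Fin n, P i j * Q i j

/-- `F(P) = √(φ'(|P|)/|P|)·P` (equal to `0` at `P = 0`). -/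
def FmapNF (φ : ℝ → ℝ) {d n : ℕ} (P : Fin d → Fin n → ℝ) : Fin d → Fin n → ℝ :=
  Real.sqrt (deriv φ (frobNorm P) / frobNorm P) • P

/-- `F*(P) = √((φ*)'(|P|)/|P|)·P` (equal to `0` at `P = 0`). -/
def FstarNF (φ : ℝ → ℝ) {d n : ℕ} (P : Fin d → Fin n → ℝ) : Fin d → Fin n → ℝ :=
  Real.sqrt (deriv (conjNF φ) (frobNorm P) / frobNorm P) • P

/-- The standard basis matrix with a `1` in entry `(k,l)`. -/
def basisMat {d n : ℕ} (k : Fin d) (l : Fin n) : Fin d → Fin n → ℝ :=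
  fun i j => if i = k ∧ j = l then 1 else 0

/-- `𝒜` has `φ`-structure with constants `(γ₃, γ₄)`. -/
def HasPhiStructure {d n : ℕ} (A : (Fin d → Fin n → ℝ) → (Fin d → Fin n → ℝ))
    (φ : ℝ → ℝ) (γ₃ γ₄ : ℝ) : Prop :=
  0 < γ₃ ∧ γ₃ ≤ 1 ∧ 1 < γ₄ ∧ Continuous A ∧
    ContDiffOn ℝ 1 A {P | P ≠ 0} ∧ A 0 = 0 ∧
    (∀ P : Fin d → Fin n → ℝ, P ≠ 0 → ∀ Q : Fin d → Fin n → ℝ,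
      γ₃ * (deriv φ (frobNorm P) / frobNorm P) * (frobNorm Q) ^ 2 ≤
        ∑ i : Fin d, ∑ j : Fin n, ∑ k : Fin d, ∑ l : Fin n,
          fderiv ℝ A P (basisMat k l) i j * Q i j * Q k l) ∧
    (∀ P : Fin d → Fin n → ℝ, P ≠ 0 → ∀ (i k : Fin d) (j l : Fin n),
      |fderiv ℝ A P (basisMat k l) i j| ≤ γ₄ * (deriv φ (frobNorm P) / frobNorm P))

/-!
Multiplying by `2 ^ n` and applying Young's inequality puts `t·ψ'(s)` below
`2⁻ⁿ (ψ(t) + ψ*(2ⁿ ψ'(s)))` and `ψ'(t)·s` below `2⁻ⁿ (ψ(2ⁿ s) + ψ*(ψ'(t)))`. The Δ₂-conditions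
pull the factors `2ⁿ` out of `ψ*` and `ψ`. Equality in Young's inequality gives
`ψ*(ψ'(s)) = s·ψ'(s) - ψ(s) ≤ ψ(2s) - 2ψ(s) ≤ (K₁ - 2) ψ(s)`, so the total coefficient of `ψ(t)`
is `2⁻ⁿ (K₁ - 1)`, which is at most `ε` for large `n`. Only the tangent lines of `ψ` enter, so
subgradients can take the place of `ψ'`.
-/

/-- `p` is a subgradient of `f` at `x` relative to `S`: the line of slope `p` through `(x, f x)`
supports the graph of `f` over `S`. It stands for `ψ'(x)` when `ψ` is convex; `x ∈ S` is not part of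
the definition. -/
def IsSubgradientOn (S : Set ℝ) (f : ℝ → ℝ) (x p : ℝ) : Prop :=
  ∀ y ∈ S, f x + p * (y - x) ≤ f y

lemma isSubgradientOn_deriv_of_convexOn {S : Set ℝ} {f : ℝ → ℝ} {x : ℝ} (hf : ConvexOn ℝ S f)
    (hx : x ∈ S) (hd : DifferentiableAt ℝ f x) : IsSubgradientOn S f x (deriv f x) := by
  intro y hy
  rcases lt_trichotomy y x with hyx | rfl | hxy
  · have hslope := hf.slope_le_deriv hy hx hyx hd
    rw [slope_def_field, div_le_iff₀ (sub_pos.2 hyx)] at hslope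
    linarith
  · simp
  · have hslope := hf.deriv_le_slope hx hy hxy hd
    rw [slope_def_field, le_div_iff₀ (sub_pos.2 hxy)] at hslope
    linarith

lemma IsNFunction.nonneg {ψ : ℝ → ℝ} (hψ : IsNFunction ψ) {t : ℝ} (ht : 0 ≤ t) : 0 ≤ ψ t := by
  rcases ht.eq_or_lt with rfl | ht
  · exact hψ.2.1.ge
  · exact (hψ.2.2.1 t ht).le

lemma IsRegularNFunction.isSubgradientOn_deriv {ψ : ℝ → ℝ} (hψ : IsRegularNFunction ψ) {t : ℝ}
    (ht : 0 ≤ t) : IsSubgradientOn (Ici 0) ψ t (deriv ψ t) := by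
  by_cases hd : DifferentiableAt ℝ ψ t
  · exact isSubgradientOn_deriv_of_convexOn hψ.1.1 ht hd
  · -- `ψ` is arbitrary on `(-∞, 0)`, so `deriv ψ 0` may be the junk value `0`,
    -- which is a subgradient because `0` minimizes `ψ`.
    have ht0 : t = 0 := by
      by_contra hne
      have hpos : 0 < t := ht.lt_of_ne' hne
      exact hd ((hψ.2.2.1.differentiableOn (by norm_num)).differentiableAt (Ioi_mem_nhds hpos))
    intro y hy
    rw [deriv_zero_of_not_differentiableAt hd, ht0, hψ.1.2.1, zero_mul, add_zero]
    exact hψ.1.nonneg hy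

section Conjugate

variable {ψ : ℝ → ℝ}

lemma bddAbove_range_mul_sub (hnonneg : ∀ t ≥ 0, 0 ≤ ψ t)
    (hlim : Tendsto (fun t => ψ t / t) atTop atTop) (a : ℝ) :
    BddAbove (range fun s : Ici (0 : ℝ) => (s : ℝ) * a - ψ s) := by
  obtain ⟨R, hR⟩ := eventually_atTop.1
    ((hlim.eventually_ge_atTop a).and (eventually_gt_atTop 0))
  refine ⟨R * |a|, ?_⟩
  rintro _ ⟨⟨s, hs : 0 ≤ s⟩, rfl⟩
  have hR0 : 0 < R := (hR R le_rfl).2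
  rcases le_total s R with hsR | hRs
  · have hsa : s * a ≤ R * |a| :=
      (mul_le_mul_of_nonneg_left (le_abs_self a) hs).trans (by gcongr)
    simp only
    linarith [hnonneg s hs]
  · obtain ⟨ha, hs0⟩ := hR s hRs
    have hsa : a * s ≤ ψ s := (le_div_iff₀ hs0).1 ha
    have hbound : 0 ≤ R * |a| := by positivity
    simp only
    linarith

lemma mul_le_add_conjNF {a : ℝ}
    (hbdd : BddAbove (range fun s : Ici (0 : ℝ) => (s : ℝ) * a - ψ s)) {t : ℝ} (ht : 0 ≤ t) :
    t * a ≤ ψ t + conjNF ψ a :=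
  sub_le_iff_le_add'.1 (le_ciSup hbdd ⟨t, ht⟩)

lemma IsSubgradientOn.conjNF_le {s p : ℝ} (hp : IsSubgradientOn (Ici 0) ψ s p) :
    conjNF ψ p ≤ s * p - ψ s :=
  ciSup_le fun r => by linarith [hp r r.2]

end Conjugate

section Delta2

variable {ψ : ℝ → ℝ} {K K₁ K₂ : ℝ}

lemma SatisfiesDelta2.two_pow_mul_le (hK : SatisfiesDelta2 ψ K) (n : ℕ) {t : ℝ} (ht : 0 ≤ t) :
    ψ (2 ^ n * t) ≤ K ^ n * ψ t := by
  have hK0 : 0 ≤ K := zero_le_two.trans hK.1.le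
  induction n with
  | zero => simp
  | succ n ih =>
    calc ψ (2 ^ (n + 1) * t) = ψ (2 * (2 ^ n * t)) := by ring_nf
      _ ≤ K * ψ (2 ^ n * t) := hK.2 _ (by positivity)
      _ ≤ K * (K ^ n * ψ t) := by gcongr
      _ = K ^ (n + 1) * ψ t := by ring

lemma SatisfiesDelta2.nonneg (hK : SatisfiesDelta2 ψ K)
    (hlim : Tendsto (fun t => ψ t / t) atTop atTop) {t : ℝ} (ht : 0 ≤ t) : 0 ≤ ψ t := by
  have hK2 := hK.1
  rcases ht.eq_or_lt with rfl | ht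
  · have h0 := hK.2 0 le_rfl
    rw [mul_zero] at h0
    nlinarith
  · have hdyadic : Tendsto (fun n : ℕ => 2 ^ n * t) atTop atTop :=
      (tendsto_pow_atTop_atTop_of_one_lt one_lt_two).atTop_mul_const ht
    obtain ⟨n, hn⟩ := ((hlim.comp hdyadic).eventually_gt_atTop 0).exists
    have hψn : 0 < ψ (2 ^ n * t) := (div_pos_iff_of_pos_right (by positivity)).1 hn
    exact nonneg_of_mul_nonneg_right (hψn.le.trans (hK.two_pow_mul_le n ht.le)) (by positivity)

lemma IsSubgradientOn.conjNF_le_of_delta2 {s p : ℝ} (hp : IsSubgradientOn (Ici 0) ψ s p)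
    (hK : SatisfiesDelta2 ψ K) (hs : 0 ≤ s) : conjNF ψ p ≤ (K - 2) * ψ s := by
  have hdouble : s * p ≤ ψ (2 * s) - ψ s := by
    linarith [hp (2 * s) (mul_nonneg zero_le_two hs)]
  calc conjNF ψ p ≤ s * p - ψ s := hp.conjNF_le
    _ ≤ ψ (2 * s) - 2 * ψ s := by linarith
    _ ≤ (K - 2) * ψ s := by linarith [hK.2 s hs]

lemma IsSubgradientOn.two_pow_mul_mul_le_of_delta2 {t q : ℝ}
    (hq : IsSubgradientOn (Ici 0) ψ t q) (hK : SatisfiesDelta2 ψ K)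
    (hlim : Tendsto (fun t => ψ t / t) atTop atTop) (n : ℕ) {s : ℝ} (hs : 0 ≤ s) (ht : 0 ≤ t) :
    2 ^ n * (q * s) ≤ (K - 2) * ψ t + K ^ n * ψ s := by
  have hbdd := bddAbove_range_mul_sub (fun _ => hK.nonneg hlim) hlim q
  calc 2 ^ n * (q * s) = 2 ^ n * s * q := by ring
    _ ≤ ψ (2 ^ n * s) + conjNF ψ q := mul_le_add_conjNF hbdd (by positivity)
    _ ≤ K ^ n * ψ s + (K - 2) * ψ t :=
      add_le_add (hK.two_pow_mul_le n hs) (hq.conjNF_le_of_delta2 hK ht)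
    _ = (K - 2) * ψ t + K ^ n * ψ s := add_comm _ _

lemma IsSubgradientOn.two_pow_mul_mul_le_of_delta2_conjNF {s p : ℝ}
    (hp : IsSubgradientOn (Ici 0) ψ s p) (hK₁ : SatisfiesDelta2 ψ K₁)
    (hK₂ : SatisfiesDelta2 (conjNF ψ) K₂) (hlim : Tendsto (fun t => ψ t / t) atTop atTop)
    (n : ℕ) {t : ℝ} (hs : 0 ≤ s) (ht : 0 ≤ t) :
    2 ^ n * (t * p) ≤ ψ t + K₂ ^ n * ((K₁ - 2) * ψ s) := by
  have hψs := hK₁.nonneg hlim hs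
  have hψt := hK₁.nonneg hlim ht
  have hK₁2 : 0 ≤ K₁ - 2 := sub_nonneg.2 hK₁.1.le
  have hK₂0 : 0 ≤ K₂ := zero_le_two.trans hK₂.1.le
  rcases le_total p 0 with hp0 | hp0
  · calc 2 ^ n * (t * p) ≤ 0 :=
          mul_nonpos_of_nonneg_of_nonpos (by positivity) (mul_nonpos_of_nonneg_of_nonpos ht hp0)
      _ ≤ ψ t + K₂ ^ n * ((K₁ - 2) * ψ s) := by positivity
  · have hbdd := bddAbove_range_mul_sub (fun _ => hK₁.nonneg hlim) hlim (2 ^ n * p)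
    calc 2 ^ n * (t * p) = t * (2 ^ n * p) := by ring
      _ ≤ ψ t + conjNF ψ (2 ^ n * p) := mul_le_add_conjNF hbdd ht
      _ ≤ ψ t + K₂ ^ n * conjNF ψ p := by gcongr; exact hK₂.two_pow_mul_le n hp0
      _ ≤ ψ t + K₂ ^ n * ((K₁ - 2) * ψ s) := by
        gcongr
        exact hp.conjNF_le_of_delta2 hK₁ hs

end Delta2

theorem young_eps_deriv_general (K₁ K₂ ε : ℝ) (hε : 0 < ε) :
    ∃ c > (0 : ℝ), ∀ ψ : ℝ → ℝ, Tendsto (fun t => ψ t / t) atTop atTop →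
      SatisfiesDelta2 ψ K₁ → SatisfiesDelta2 (conjNF ψ) K₂ →
      ∀ s ≥ (0 : ℝ), ∀ t ≥ (0 : ℝ), ∀ p q : ℝ,
        IsSubgradientOn (Ici 0) ψ s p → IsSubgradientOn (Ici 0) ψ t q →
        t * p + q * s ≤ ε * ψ t + c * ψ s := by
  obtain ⟨n, hn⟩ := pow_unbounded_of_one_lt ((K₁ - 1) / ε) one_lt_two
  have hnε : K₁ - 1 ≤ 2 ^ n * ε := ((div_lt_iff₀ hε).1 hn).le
  set C := K₂ ^ n * (K₁ - 2) + K₁ ^ n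
  -- The maximum only serves to make `c` positive when `K₁` and `K₂` admit no `ψ`.
  refine ⟨max 1 (C / 2 ^ n), by positivity, fun ψ hlim hK₁ hK₂ s hs t ht p q hp hq => ?_⟩
  have hC : C ≤ 2 ^ n * max 1 (C / 2 ^ n) :=
    (div_le_iff₀' (by positivity)).1 (le_max_right _ _)
  have hψs := hK₁.nonneg hlim hs
  have hψt := hK₁.nonneg hlim ht
  refine le_of_mul_le_mul_left ?_ (show (0 : ℝ) < 2 ^ n by positivity)
  calc 2 ^ n * (t * p + q * s)
      ≤ (ψ t + K₂ ^ n * ((K₁ - 2) * ψ s)) + ((K₁ - 2) * ψ t + K₁ ^ n * ψ s) := by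
        rw [mul_add]
        exact add_le_add (hp.two_pow_mul_mul_le_of_delta2_conjNF hK₁ hK₂ hlim n hs ht)
          (hq.two_pow_mul_mul_le_of_delta2 hK₁ hlim n hs ht)
    _ = (K₁ - 1) * ψ t + C * ψ s := by ring
    _ ≤ 2 ^ n * ε * ψ t + 2 ^ n * max 1 (C / 2 ^ n) * ψ s := by gcongr
    _ = 2 ^ n * (ε * ψ t + max 1 (C / 2 ^ n) * ψ s) := by ring

/-- refined ε-Young inequality `t·ψ'(s) + ψ'(t)·s ≤ ε·ψ(t) + c_ε·ψ(s)`,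
with `c_ε` depending only on `ε` and the Δ₂-constants of `ψ` and `ψ*`. -/
theorem young_eps_deriv (K₁ K₂ ε : ℝ) (hε : 0 < ε) :
    ∃ c > (0:ℝ), ∀ ψ : ℝ → ℝ, IsRegularNFunction ψ →
      SatisfiesDelta2 ψ K₁ → SatisfiesDelta2 (conjNF ψ) K₂ →
      ∀ s ≥ (0:ℝ), ∀ t ≥ (0:ℝ), t * deriv ψ s + deriv ψ t * s ≤ ε * ψ t + c * ψ s := by
  obtain ⟨c, hc, hyoung⟩ := young_eps_deriv_general K₁ K₂ ε hε
  exact ⟨c, hc, fun ψ hψ hK₁ hK₂ s hs t ht => hyoung ψ hψ.1.2.2.2.2 hK₁ hK₂ s hs t ht _ _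
    (hψ.isSubgradientOn_deriv hs) (hψ.isSubgradientOn_deriv ht)⟩

end
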